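/- arXiv:2010.13896 — 4 statements merged into one kernel-verified Lean document; each statement's English description precedes it below -/
import Mathlib

section
/- Let M be a d×d real matrix and suppose there exists a real symmetric positive definite d×d matrix P such that P − MᵀPM is positive definite. Then for every initial vector x₀ ∈ ℝᵈ, the iterates xₙ = Mⁿx₀ of the linear recursion x_{n+1} = M xₙ converge to 0 as n → ∞. -/
open Matrix Filter

/-!
The Lyapunov function `V x = xᴴ P x` is nonnegative and decreases by `xᴴ (P - Mᴴ P M) x` when `x` is
replaced by `M x`. Hence these decrements are summable along an orbit, so they tend to zero. Writing
`P - Mᴴ P M = Bᴴ B` with `B` invertible, the decrement is the squared Euclidean norm of `B x`; thus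
`B xₙ → 0` and `xₙ = B⁻¹ (B xₙ) → 0`.
-/

theorem summable_of_add_succ_le {V W : ℕ → ℝ} (hV : BddBelow (Set.range V)) (hW : ∀ n, 0 ≤ W n)
    (hVW : ∀ n, W n + V (n + 1) ≤ V n) : Summable W := by
  obtain ⟨b, hb⟩ := hV
  refine summable_of_sum_range_le (c := V 0 - b) hW fun n ↦ ?_
  calc ∑ i ∈ Finset.range n, W i
      ≤ ∑ i ∈ Finset.range n, (V i - V (i + 1)) :=
        Finset.sum_le_sum fun i _ ↦ le_sub_iff_add_le.mpr (hVW i)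
    _ = V 0 - V n := Finset.sum_range_sub' V n
    _ ≤ V 0 - b := sub_le_sub_left (hb (Set.mem_range_self n)) _

theorem star_dotProduct_conjTranspose_mul_mul_mulVec {m n R : Type*} [Fintype m] [Fintype n]
    [NonUnitalSemiring R] [StarRing R] (P : Matrix m m R) (M : Matrix m n R) (x : n → R) :
    star x ⬝ᵥ ((Mᴴ * P * M) *ᵥ x) = star (M *ᵥ x) ⬝ᵥ (P *ᵥ (M *ᵥ x)) := by
  rw [star_mulVec, ← dotProduct_mulVec, mulVec_mulVec, mulVec_mulVec, Matrix.mul_assoc]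

section RCLike

open scoped ComplexOrder MatrixOrder Topology

variable {ι n 𝕜 : Type*} [Fintype n] [RCLike 𝕜] {l : Filter ι}

theorem re_star_dotProduct_self (x : n → 𝕜) : RCLike.re (star x ⬝ᵥ x) = ∑ i, ‖x i‖ ^ 2 := by
  simp only [dotProduct, Pi.star_apply, RCLike.star_def, RCLike.conj_mul, map_sum,
    ← RCLike.ofReal_pow, RCLike.ofReal_re]

theorem tendsto_zero_of_tendsto_re_star_dotProduct_self {x : ι → n → 𝕜}
    (hx : Tendsto (fun k ↦ RCLike.re (star (x k) ⬝ᵥ x k)) l (𝓝 0)) : Tendsto x l (𝓝 0) := by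
  simp only [re_star_dotProduct_self] at hx
  refine tendsto_pi_nhds.mpr fun i ↦ tendsto_zero_iff_norm_tendsto_zero.mpr ?_
  have norm_sq_tendsto : Tendsto (fun k ↦ ‖x k i‖ ^ 2) l (𝓝 0) :=
    squeeze_zero (fun k ↦ sq_nonneg _)
      (fun k ↦ Finset.single_le_sum (f := fun j ↦ ‖x k j‖ ^ 2) (fun j _ ↦ sq_nonneg _)
        (Finset.mem_univ i)) hx
  simpa using norm_sq_tendsto.sqrt

theorem tendsto_zero_of_tendsto_re_star_dotProduct_mulVec {Q : Matrix n n 𝕜} (hQ : Q.PosDef)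
    {x : ι → n → 𝕜} (hx : Tendsto (fun k ↦ RCLike.re (star (x k) ⬝ᵥ (Q *ᵥ x k))) l (𝓝 0)) :
    Tendsto x l (𝓝 0) := by
  classical
  obtain ⟨B, hB, rfl⟩ :=
    CStarAlgebra.isStrictlyPositive_iff_eq_star_mul_self.mp hQ.isStrictlyPositive
  have form_eq (y : n → 𝕜) : star y ⬝ᵥ ((star B * B) *ᵥ y) = star (B *ᵥ y) ⬝ᵥ (B *ᵥ y) := by
    simpa [star_eq_conjTranspose] using star_dotProduct_conjTranspose_mul_mul_mulVec 1 B y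
  have mulVec_tendsto : Tendsto (fun k ↦ B *ᵥ x k) l (𝓝 0) :=
    tendsto_zero_of_tendsto_re_star_dotProduct_self (by simpa only [form_eq] using hx)
  have inv_mulVec_continuous : Continuous fun y : n → 𝕜 ↦ B⁻¹ *ᵥ y := by fun_prop
  have inv_mulVec_tendsto := (inv_mulVec_continuous.tendsto 0).comp mulVec_tendsto
  simpa [Function.comp_def, mulVec_mulVec,
    nonsing_inv_mul B ((isUnit_iff_isUnit_det B).mp hB)] using inv_mulVec_tendsto

theorem lyapunov_implies_iterates_tendsto_zero_general [DecidableEq n] {M P : Matrix n n 𝕜}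
    (hP : P.PosSemidef) (hLyap : (P - Mᴴ * P * M).PosDef) (x₀ : n → 𝕜) :
    Tendsto (fun k : ℕ ↦ (M ^ k) *ᵥ x₀) atTop (𝓝 0) := by
  let V (x : n → 𝕜) : ℝ := RCLike.re (star x ⬝ᵥ (P *ᵥ x))
  let W (x : n → 𝕜) : ℝ := RCLike.re (star x ⬝ᵥ ((P - Mᴴ * P * M) *ᵥ x))
  have decrement (x : n → 𝕜) : W x + V (M *ᵥ x) = V x := by
    simp only [W, V, sub_mulVec, dotProduct_sub, map_sub,
      star_dotProduct_conjTranspose_mul_mul_mulVec, sub_add_cancel]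
  have summable_decrements : Summable fun k : ℕ ↦ W ((M ^ k) *ᵥ x₀) := by
    refine summable_of_add_succ_le (V := fun k ↦ V ((M ^ k) *ᵥ x₀))
      ⟨0, Set.forall_mem_range.mpr fun k ↦ hP.re_dotProduct_nonneg _⟩
      (fun k ↦ hLyap.posSemidef.re_dotProduct_nonneg _) fun k ↦ ?_
    rw [pow_succ', ← mulVec_mulVec]
    exact (decrement _).le
  exact tendsto_zero_of_tendsto_re_star_dotProduct_mulVec hLyap
    summable_decrements.tendsto_atTop_zero

end RCLike

/-- If there is a symmetric positive definite `P` with `P - MᵀPM` positive definite,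
then every orbit of the linear recursion `x_{n+1} = M xₙ`, i.e. `xₙ = Mⁿ x₀`,
converges to `0`. -/
theorem lyapunov_implies_iterates_tendsto_zero {d : ℕ} (M : Matrix (Fin d) (Fin d) ℝ)
    (P : Matrix (Fin d) (Fin d) ℝ) (hP : P.PosDef) (hLyap : (P - Mᵀ * P * M).PosDef) :
    ∀ x₀ : Fin d → ℝ,
      Tendsto (fun n : ℕ => (M ^ n) *ᵥ x₀) atTop (nhds 0) :=
  lyapunov_implies_iterates_tendsto_zero_general hP.posSemidef
    (by rwa [conjTranspose_eq_transpose_of_trivial])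
end

section
/- Let P be a d×d real symmetric positive definite matrix, let N be any d×d real matrix, and set Q := P⁻¹. Then the block matrix [[P, NᵀP], [PN, P]] is positive definite if and only if the block matrix [[Q, QNᵀ], [NQ, Q]] is positive definite. -/
open Matrix

section Congruence

variable {m n α : Type*} [Fintype m] [Fintype n] [DecidableEq m] [DecidableEq n]
  [CommRing α] {P : Matrix m m α} {R : Matrix n n α}

theorem fromBlocks_inv_mul_fromBlocks_mul_fromBlocks_inv
    (hP : IsUnit P) (hR : IsUnit R) (B : Matrix m n α) (C : Matrix n m α) :
    fromBlocks P⁻¹ 0 0 R⁻¹ * fromBlocks P (B * R) (R * C) R * fromBlocks P⁻¹ 0 0 R⁻¹ =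
      fromBlocks P⁻¹ (P⁻¹ * B) (C * P⁻¹) R⁻¹ := by
  rw [isUnit_iff_isUnit_det] at hP hR
  simp [fromBlocks_multiply, ← Matrix.mul_assoc, nonsing_inv_mul, hP, hR,
    mul_nonsing_inv_cancel_right]

variable [PartialOrder α] [StarRing α]

theorem posDef_fromBlocks_iff_posDef_fromBlocks_inv_of_isHermitian
    (hP : IsUnit P) (hR : IsUnit R) (hP_herm : P.IsHermitian) (hR_herm : R.IsHermitian)
    (B : Matrix m n α) (C : Matrix n m α) :
    (fromBlocks P (B * R) (R * C) R).PosDef ↔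
      (fromBlocks P⁻¹ (P⁻¹ * B) (C * P⁻¹) R⁻¹).PosDef := by
  have diag_isUnit : IsUnit (fromBlocks P⁻¹ 0 0 R⁻¹) :=
    isUnit_fromBlocks_zero₂₁.2 ⟨isUnit_nonsing_inv_iff.2 hP, isUnit_nonsing_inv_iff.2 hR⟩
  have diag_star : star (fromBlocks P⁻¹ 0 0 R⁻¹) = fromBlocks P⁻¹ 0 0 R⁻¹ :=
    hP_herm.inv.fromBlocks conjTranspose_zero hR_herm.inv
  rw [← diag_isUnit.posDef_star_left_conjugate_iff, diag_star,
    fromBlocks_inv_mul_fromBlocks_mul_fromBlocks_inv hP hR]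

theorem blockMatrix_posDef_iff_inv_blockMatrix_posDef_general
    (hP : IsUnit P) (hR : IsUnit R) (B : Matrix m n α) (C : Matrix n m α) :
    (fromBlocks P (B * R) (R * C) R).PosDef ↔
      (fromBlocks P⁻¹ (P⁻¹ * B) (C * P⁻¹) R⁻¹).PosDef := by
  -- Either side forces `P` and `R` to be Hermitian, because they or their inverses are the
  -- diagonal blocks of a Hermitian matrix.
  have iff_of_isHermitian (hP_herm : P.IsHermitian) (hR_herm : R.IsHermitian) :=
    posDef_fromBlocks_iff_posDef_fromBlocks_inv_of_isHermitian hP hR hP_herm hR_herm B C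
  constructor
  · intro h
    obtain ⟨hP_herm, -, -, hR_herm⟩ := isHermitian_fromBlocks_iff.1 h.isHermitian
    exact (iff_of_isHermitian hP_herm hR_herm).1 h
  · intro h
    obtain ⟨hPinv_herm, -, -, hRinv_herm⟩ := isHermitian_fromBlocks_iff.1 h.isHermitian
    let _ := hP.invertible
    let _ := hR.invertible
    exact (iff_of_isHermitian ((isHermitian_inv P).1 hPinv_herm)
      ((isHermitian_inv R).1 hRinv_herm)).2 h

end Congruence

/-- Congruence by `diag(Q,Q)` with `Q = P⁻¹`: for symmetric positive definite `P`
and any `N`, `[[P, NᵀP],[PN, P]] ≻ 0` iff `[[Q, QNᵀ],[NQ, Q]] ≻ 0`. -/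
theorem blockMatrix_posDef_iff_inv_blockMatrix_posDef {d : ℕ}
    (P N : Matrix (Fin d) (Fin d) ℝ) (hP : P.PosDef) :
    (Matrix.fromBlocks P (Nᵀ * P) (P * N) P).PosDef ↔
      (Matrix.fromBlocks P⁻¹ (P⁻¹ * Nᵀ) (N * P⁻¹) P⁻¹).PosDef :=
  blockMatrix_posDef_iff_inv_blockMatrix_posDef_general hP.isUnit hP.isUnit Nᵀ N
end

section
/- Let A be a d×d real matrix and B a d×p real matrix. There exist a p×d real matrix K and a d×d real symmetric positive definite matrix P with P − (A+BK)ᵀP(A+BK) positive definite if and only if there exist a d×d real symmetric positive definite matrix Q and a p×d real matrix Y such that the 2d×2d block matrix [[Q, QAᵀ + YᵀBᵀ], [AQ + BY, Q]] is positive definite. -/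
open Matrix

/-!
For a closed-loop matrix `M`, the Schur complement of the lower right block of
`[[Q, QMᴴ], [MQ, Q]]` is `Q - QMᴴQ⁻¹MQ = Q (Q⁻¹ - MᴴQ⁻¹M) Q`, which is congruent to the Lyapunov
expression `P - MᴴPM` at `P = Q⁻¹`. For `M = A + BK` the block `MQ = AQ + BKQ` is bilinear in
`(K, Q)`, and the invertible substitution `Y = KQ` makes it linear.
-/

section BlockDiagonal

variable {m n R : Type*} [Finite m] [Finite n] [Ring R] [PartialOrder R] [StarRing R]
  [AddLeftMono R]

theorem posDef_fromBlocks_zero_zero_iff {A : Matrix m m R} {D : Matrix n n R} :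
    (fromBlocks A 0 0 D).PosDef ↔ A.PosDef ∧ D.PosDef := by
  cases nonempty_fintype m
  cases nonempty_fintype n
  refine ⟨fun h => ⟨h.submatrix Sum.inl_injective, h.submatrix Sum.inr_injective⟩, ?_⟩
  rintro ⟨hA, hD⟩
  refine .of_dotProduct_mulVec_pos
    (hA.isHermitian.fromBlocks conjTranspose_zero hD.isHermitian) fun x hx => ?_
  obtain ⟨u, v, rfl⟩ : ∃ u v, x = Sum.elim u v := ⟨_, _, (Sum.elim_comp_inl_inr x).symm⟩
  have quadraticForm_eq : star (Sum.elim u v) ⬝ᵥ (fromBlocks A 0 0 D *ᵥ Sum.elim u v) =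
      star u ⬝ᵥ (A *ᵥ u) + star v ⬝ᵥ (D *ᵥ v) := by
    simp [fromBlocks_mulVec, Function.star_sumElim]
  rw [quadraticForm_eq]
  by_cases hu : u = 0
  · have hv : v ≠ 0 := by
      rintro rfl
      exact hx (by simp [hu])
    exact add_pos_of_nonneg_of_pos (hA.posSemidef.dotProduct_mulVec_nonneg u)
      (hD.dotProduct_mulVec_pos hv)
  · exact add_pos_of_pos_of_nonneg (hA.dotProduct_mulVec_pos hu)
      (hD.posSemidef.dotProduct_mulVec_nonneg v)

end BlockDiagonal

section SchurComplement

variable {m n R : Type*} [Fintype n] [DecidableEq n]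
  [CommRing R] [PartialOrder R] [StarRing R] [AddLeftMono R]

theorem posDef_fromBlocks_iff_posDef_schurComplement₂₂ [Finite m] (A : Matrix m m R)
    (B : Matrix m n R) {D : Matrix n n R} (hD : D.PosDef) [Invertible D] :
    (fromBlocks A B Bᴴ D).PosDef ↔ (A - B * D⁻¹ * Bᴴ).PosDef := by
  classical
  cases nonempty_fintype m
  set L : Matrix (m ⊕ n) (m ⊕ n) R := fromBlocks 1 (B * D⁻¹) 0 1 with hL
  have hL_unit : IsUnit L := by simp [hL]
  have hL_star : star L = fromBlocks 1 0 (D⁻¹ * Bᴴ) 1 := by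
    simp [hL, star_eq_conjTranspose, fromBlocks_conjTranspose, conjTranspose_nonsing_inv,
      hD.isHermitian.eq]
  have block_factorization :
      fromBlocks A B Bᴴ D = L * fromBlocks (A - B * D⁻¹ * Bᴴ) 0 0 D * star L := by
    simpa only [hL_star, invOf_eq_nonsing_inv] using fromBlocks_eq_of_invertible₂₂ A B Bᴴ D
  rw [block_factorization, hL_unit.posDef_star_right_conjugate_iff,
    posDef_fromBlocks_zero_zero_iff, and_iff_left hD]

theorem posDef_fromBlocks_mul_iff_posDef_inv_sub [Fintype m] [DecidableEq m] {Q : Matrix m m R}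
    (hQ : Q.IsHermitian) [Invertible Q] {S : Matrix n n R} (hS : S.PosDef) [Invertible S]
    (M : Matrix n m R) :
    (fromBlocks Q (Q * Mᴴ) (M * Q) S).PosDef ↔ (Q⁻¹ - Mᴴ * S⁻¹ * M).PosDef := by
  have corner_eq : (Q * Mᴴ)ᴴ = M * Q := by simp [hQ.eq]
  have schurComplement_eq :
      Q - Q * Mᴴ * S⁻¹ * (M * Q) = star Q * (Q⁻¹ - Mᴴ * S⁻¹ * M) * Q := by
    simp [star_eq_conjTranspose, hQ.eq, Matrix.mul_sub, Matrix.sub_mul, Matrix.mul_assoc]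
  rw [← corner_eq, posDef_fromBlocks_iff_posDef_schurComplement₂₂ _ _ hS, corner_eq,
    schurComplement_eq, (isUnit_of_invertible Q).posDef_star_left_conjugate_iff]

end SchurComplement

section Stabilization

variable {n p 𝕜 : Type*} [Fintype n] [Fintype p]
  [Field 𝕜] [PartialOrder 𝕜] [StarRing 𝕜] [AddLeftMono 𝕜]

theorem posDef_inv_sub_closedLoop_iff [DecidableEq n] (A : Matrix n n 𝕜) (B : Matrix n p 𝕜)
    (K : Matrix p n 𝕜) {Q : Matrix n n 𝕜} (hQ : Q.PosDef) :
    (Q⁻¹ - (A + B * K)ᴴ * Q⁻¹ * (A + B * K)).PosDef ↔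
      (fromBlocks Q (Q * Aᴴ + (K * Q)ᴴ * Bᴴ) (A * Q + B * (K * Q)) Q).PosDef := by
  let _ := hQ.isUnit.invertible
  have upper_eq : Q * Aᴴ + (K * Q)ᴴ * Bᴴ = Q * (A + B * K)ᴴ := by
    simp [hQ.isHermitian.eq, Matrix.mul_add, Matrix.mul_assoc]
  have lower_eq : A * Q + B * (K * Q) = (A + B * K) * Q := by
    rw [Matrix.add_mul, Matrix.mul_assoc]
  rw [upper_eq, lower_eq, posDef_fromBlocks_mul_iff_posDef_inv_sub hQ.isHermitian hQ]

theorem stabilizable_iff_LMI_general (A : Matrix n n 𝕜) (B : Matrix n p 𝕜) :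
    (∃ (K : Matrix p n 𝕜) (P : Matrix n n 𝕜),
        P.PosDef ∧ (P - (A + B * K)ᴴ * P * (A + B * K)).PosDef) ↔
      ∃ (Q : Matrix n n 𝕜) (Y : Matrix p n 𝕜),
        Q.PosDef ∧ (fromBlocks Q (Q * Aᴴ + Yᴴ * Bᴴ) (A * Q + B * Y) Q).PosDef := by
  classical
  constructor
  · rintro ⟨K, P, hP, hLyapunov⟩
    let _ := hP.isUnit.invertible
    refine ⟨P⁻¹, K * P⁻¹, hP.inv, (posDef_inv_sub_closedLoop_iff A B K hP.inv).mp ?_⟩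
    rwa [inv_inv_of_invertible]
  · rintro ⟨Q, Y, hQ, hLMI⟩
    let _ := hQ.isUnit.invertible
    refine ⟨Y * Q⁻¹, Q⁻¹, hQ.inv, (posDef_inv_sub_closedLoop_iff A B (Y * Q⁻¹) hQ).mpr ?_⟩
    rwa [inv_mul_cancel_right_of_invertible]

end Stabilization

/-- LMI reformulation of stabilizability: there exist `K` and symmetric positive
definite `P` with `P - (A+BK)ᵀP(A+BK) ≻ 0` iff there exist symmetric positive
definite `Q` and `Y` with `[[Q, QAᵀ+YᵀBᵀ],[AQ+BY, Q]] ≻ 0`. -/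
theorem stabilizable_iff_LMI {d p : ℕ}
    (A : Matrix (Fin d) (Fin d) ℝ) (B : Matrix (Fin d) (Fin p) ℝ) :
    (∃ (K : Matrix (Fin p) (Fin d) ℝ) (P : Matrix (Fin d) (Fin d) ℝ),
        P.PosDef ∧ (P - (A + B * K)ᵀ * P * (A + B * K)).PosDef) ↔
      (∃ (Q : Matrix (Fin d) (Fin d) ℝ) (Y : Matrix (Fin p) (Fin d) ℝ),
        Q.PosDef ∧
          (Matrix.fromBlocks Q (Q * Aᵀ + Yᵀ * Bᵀ) (A * Q + B * Y) Q).PosDef) := by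
  simpa only [conjTranspose_eq_transpose_of_trivial] using stabilizable_iff_LMI_general A B
end

section
/- Let A be a d×d real matrix and B a d×p real matrix. Suppose Q is a d×d real symmetric positive definite matrix and Y is a p×d real matrix such that the block matrix [[Q, QAᵀ + YᵀBᵀ], [AQ + BY, Q]] is positive definite. Then, setting K := YQ⁻¹ and P := Q⁻¹, the matrix P is symmetric positive definite, P − (A+BK)ᵀP(A+BK) is positive definite, and consequently A + BK is stable. -/
open Matrix

/-- A real square matrix is stable if every complex eigenvalue (root of its
characteristic polynomial over `ℂ`) has modulus strictly less than one. -/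
def IsStableMatrix {d : ℕ} (M : Matrix (Fin d) (Fin d) ℝ) : Prop :=
  ∀ lam : ℂ, (M.map (Complex.ofReal)).charpoly.IsRoot lam → ‖lam‖ < 1

/-!
Put `M = A + B K`, so that the blocks of the LMI are `Q`, `Q Mᴴ`, `M Q`, `Q`. Its Schur complement
`Q - Q Mᴴ Q⁻¹ M Q` is the congruence by `Q` of the Stein matrix `P - Mᴴ P M`, where `P = Q⁻¹`.
If `M v = μ v`, then `vᴴ (P - Mᴴ P M) v = (1 - |μ|²) vᴴ P v`, and both quadratic forms are
positive at `v ≠ 0`. For real `P` and complex `v`, the factorization `P = Lᴴ L` with `L` invertible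
shows that positive definiteness survives the passage from `ℝ` to `ℂ`.
-/

section Algebra

variable {l m n R : Type*} [Fintype m] [Fintype n]

lemma exists_mulVec_eq_smul_of_isRoot_charpoly [DecidableEq n] [CommRing R] [IsDomain R]
    {M : Matrix n n R} {μ : R} (hμ : M.charpoly.IsRoot μ) : ∃ v ≠ 0, M *ᵥ v = μ • v := by
  have hdet : (scalar n μ - M).det = 0 := by rwa [← eval_charpoly]
  obtain ⟨v, hv, hker⟩ := exists_mulVec_eq_zero_iff.mpr hdet
  refine ⟨v, hv, ?_⟩
  rw [sub_mulVec, sub_eq_zero, scalar_apply, ← smul_one_eq_diagonal, smul_mulVec,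
    one_mulVec] at hker
  exact hker.symm

lemma star_dotProduct_sub_conjTranspose_mul_mul_mulVec_of_mulVec_eq_smul [CommRing R] [StarRing R]
    {P M : Matrix n n R} {v : n → R} {μ : R} (hv : M *ᵥ v = μ • v) :
    star v ⬝ᵥ ((P - Mᴴ * P * M) *ᵥ v) = (1 - star μ * μ) * (star v ⬝ᵥ (P *ᵥ v)) := by
  have hM : star v ⬝ᵥ ((Mᴴ * P * M) *ᵥ v) = star μ * μ * (star v ⬝ᵥ (P *ᵥ v)) := by
    rw [← mulVec_mulVec, ← mulVec_mulVec, dotProduct_mulVec _ Mᴴ, ← star_mulVec, hv, star_smul,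
      mulVec_smul, dotProduct_smul, smul_dotProduct, smul_eq_mul, smul_eq_mul]
    ring
  rw [sub_mulVec, dotProduct_sub, hM, sub_mul, one_mul]

lemma add_mul_mul_inv_mul_cancel [DecidableEq n] [CommRing R] {Q : Matrix n n R}
    (hQ : IsUnit Q) (A : Matrix l n R) (B : Matrix l m R) (Y : Matrix m n R) :
    (A + B * (Y * Q⁻¹)) * Q = A * Q + B * Y := by
  rw [Matrix.add_mul, Matrix.mul_assoc, Matrix.mul_assoc,
    nonsing_inv_mul Q ((isUnit_iff_isUnit_det Q).mp hQ), Matrix.mul_one]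

end Algebra

section PosDef

variable {m n 𝕜 𝕂 : Type*} [RCLike 𝕜] [RCLike 𝕂]

open scoped ComplexOrder MatrixOrder

lemma posDef_iff_exists_isUnit_conjTranspose_mul_self [Fintype n] [DecidableEq n]
    {P : Matrix n n 𝕜} : P.PosDef ↔ ∃ L : Matrix n n 𝕜, IsUnit L ∧ P = Lᴴ * L := by
  rw [← isStrictlyPositive_iff_posDef]
  exact CStarAlgebra.isStrictlyPositive_iff_eq_star_mul_self

lemma posDef_map [Finite n] (f : 𝕜 →⋆ₐ[ℝ] 𝕂) {P : Matrix n n 𝕜} (hP : P.PosDef) :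
    (P.map f).PosDef := by
  classical
  have := Fintype.ofFinite n
  obtain ⟨L, hL, rfl⟩ := posDef_iff_exists_isUnit_conjTranspose_mul_self.mp hP
  refine posDef_iff_exists_isUnit_conjTranspose_mul_self.mpr
    ⟨L.map f, hL.map (f : 𝕜 →+* 𝕂).mapMatrix, ?_⟩
  rw [Matrix.map_mul, conjTranspose_map f fun x => map_star f x]

lemma posDef_fromBlocks_iff_posDef_schur [Finite m] [Fintype n] [DecidableEq n]
    (A : Matrix m m 𝕜) (B : Matrix m n 𝕜) {D : Matrix n n 𝕜} (hD : D.PosDef) :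
    (fromBlocks A B Bᴴ D).PosDef ↔ (A - B * D⁻¹ * Bᴴ).PosDef := by
  classical
  have := Fintype.ofFinite m
  let : Invertible D := hD.isUnit.invertible
  have hsemidef := hD.fromBlocks₂₂ A B
  have hunit : IsUnit (fromBlocks A B Bᴴ D) ↔ IsUnit (A - B * D⁻¹ * Bᴴ) := by
    rw [isUnit_fromBlocks_iff_of_invertible₂₂, invOf_eq_nonsing_inv]
  constructor <;> intro h
  · exact (hsemidef.mp h.posSemidef).posDef_iff_isUnit.mpr (hunit.mp h.isUnit)
  · exact (hsemidef.mpr h.posSemidef).posDef_iff_isUnit.mpr (hunit.mpr h.isUnit)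

variable [Fintype m] [Fintype n] [DecidableEq n]

lemma posDef_fromBlocks_iff_posDef_inv_sub {Q M : Matrix n n 𝕜} (hQ : Q.PosDef) :
    (fromBlocks Q (Q * Mᴴ) (M * Q) Q).PosDef ↔ (Q⁻¹ - Mᴴ * Q⁻¹ * M).PosDef := by
  have hQdet : IsUnit Q.det := (isUnit_iff_isUnit_det Q).mp hQ.isUnit
  have hMQ : (Q * Mᴴ)ᴴ = M * Q := by
    rw [conjTranspose_mul, conjTranspose_conjTranspose, hQ.isHermitian.eq]
  have hcongr : Q - Q * Mᴴ * Q⁻¹ * (M * Q) = star Q * (Q⁻¹ - Mᴴ * Q⁻¹ * M) * Q := by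
    rw [star_eq_conjTranspose, hQ.isHermitian.eq, Matrix.mul_sub, Matrix.sub_mul,
      mul_nonsing_inv Q hQdet, Matrix.one_mul]
    simp only [Matrix.mul_assoc]
  rw [← hMQ, posDef_fromBlocks_iff_posDef_schur Q (Q * Mᴴ) hQ, hMQ, hcongr,
    IsUnit.posDef_star_left_conjugate_iff hQ.isUnit]

lemma norm_lt_one_of_posDef_sub_of_isRoot_charpoly {P M : Matrix n n 𝕜} (hP : P.PosDef)
    (hPM : (P - Mᴴ * P * M).PosDef) {μ : 𝕜} (hμ : M.charpoly.IsRoot μ) : ‖μ‖ < 1 := by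
  obtain ⟨v, hv, hMv⟩ := exists_mulVec_eq_smul_of_isRoot_charpoly hμ
  have hform := hPM.dotProduct_mulVec_pos hv
  rw [star_dotProduct_sub_conjTranspose_mul_mul_mulVec_of_mulVec_eq_smul hMv] at hform
  have hpos : (0 : 𝕜) < 1 - star μ * μ :=
    pos_of_mul_pos_left hform (hP.dotProduct_mulVec_pos hv).le
  rw [RCLike.star_def, RCLike.conj_mul, sub_pos] at hpos
  exact (sq_lt_one_iff₀ (norm_nonneg μ)).mp (mod_cast hpos)

lemma norm_lt_one_of_posDef_sub_of_isRoot_charpoly_map (f : 𝕜 →⋆ₐ[ℝ] 𝕂) {P M : Matrix n n 𝕜}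
    (hP : P.PosDef) (hPM : (P - Mᴴ * P * M).PosDef) {μ : 𝕂}
    (hμ : (M.map f).charpoly.IsRoot μ) : ‖μ‖ < 1 := by
  have hPMmap := posDef_map f hPM
  rw [Matrix.map_sub f (map_sub f), Matrix.map_mul, Matrix.map_mul,
    conjTranspose_map f fun x => map_star f x] at hPMmap
  exact norm_lt_one_of_posDef_sub_of_isRoot_charpoly (posDef_map f hP) hPMmap hμ

/-- The homomorphism `f` covers at once complex matrices (`f = id`) and the complex eigenvalues of
real matrices (`f` the inclusion `ℝ → ℂ`). -/
theorem LMI_solution_gives_stabilizing_K_general (f : 𝕜 →⋆ₐ[ℝ] 𝕂)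
    (A : Matrix n n 𝕜) (B : Matrix n m 𝕜) (Q : Matrix n n 𝕜) (Y : Matrix m n 𝕜)
    (hLMI : (fromBlocks Q (Q * Aᴴ + Yᴴ * Bᴴ) (A * Q + B * Y) Q).PosDef) :
    (Q⁻¹).PosDef ∧
      (Q⁻¹ - (A + B * (Y * Q⁻¹))ᴴ * Q⁻¹ * (A + B * (Y * Q⁻¹))).PosDef ∧
      ∀ μ : 𝕂, ((A + B * (Y * Q⁻¹)).map f).charpoly.IsRoot μ → ‖μ‖ < 1 := by
  have hQ : Q.PosDef := hLMI.submatrix Sum.inl_injective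
  have hMQ := add_mul_mul_inv_mul_cancel hQ.isUnit A B Y
  have hQM : Q * (A + B * (Y * Q⁻¹))ᴴ = Q * Aᴴ + Yᴴ * Bᴴ := by
    simpa only [conjTranspose_mul, conjTranspose_add, hQ.isHermitian.eq] using
      congrArg conjTranspose hMQ
  rw [← hMQ, ← hQM] at hLMI
  have hStein := (posDef_fromBlocks_iff_posDef_inv_sub hQ).mp hLMI
  exact ⟨hQ.inv, hStein,
    fun _ => norm_lt_one_of_posDef_sub_of_isRoot_charpoly_map f hQ.inv hStein⟩

end PosDef

/-- Recovering the control matrix from an LMI solution: if `Q ≻ 0` and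
`[[Q, QAᵀ+YᵀBᵀ],[AQ+BY, Q]] ≻ 0`, then with `K := YQ⁻¹` and `P := Q⁻¹`, `P` is
symmetric positive definite, `P - (A+BK)ᵀP(A+BK) ≻ 0`, and `A + BK` is stable. -/
theorem LMI_solution_gives_stabilizing_K {d p : ℕ}
    (A : Matrix (Fin d) (Fin d) ℝ) (B : Matrix (Fin d) (Fin p) ℝ)
    (Q : Matrix (Fin d) (Fin d) ℝ) (Y : Matrix (Fin p) (Fin d) ℝ)
    (hQ : Q.PosDef)
    (hLMI : (Matrix.fromBlocks Q (Q * Aᵀ + Yᵀ * Bᵀ) (A * Q + B * Y) Q).PosDef) :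
    (Q⁻¹).PosDef ∧
      (Q⁻¹ - (A + B * (Y * Q⁻¹))ᵀ * Q⁻¹ * (A + B * (Y * Q⁻¹))).PosDef ∧
      IsStableMatrix (A + B * (Y * Q⁻¹)) := by
  simp only [← conjTranspose_eq_transpose_of_trivial] at hLMI ⊢
  exact LMI_solution_gives_stabilizing_K_general (RCLike.ofRealStarAlgHom ℂ) A B Q Y hLMI
end
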